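/- Let m ≤ 2^{k/20}, let f : {0,1}^m → {0,1}, and let D ⊆ {0,1}^m with |D| ≥ 2^{m−k/2}. For M ∈ 𝔽₂^{k×(m−k)}, let U_{M,D} and U_{m,D} be the conditional distributions of U_M and of the uniform distribution on {0,1}^m on the set D (taking U_{M,D} uniform on D if U_M has no mass on D). Then E_{M ∼ U_{k×(m−k)}}[ ‖f(U_{M,D}) − f(U_{m,D})‖ ] ≤ 2^{−k/9} (for all sufficiently large k). -/

import Mathlib

open Finset

/-- The product of the row vector `x` with the matrix `M`. -/
def evM {k n : ℕ} (M : Fin k → Fin n → ZMod 2) (x : Fin k → ZMod 2) : Fin n → ZMod 2 :=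
  fun j => ∑ i, x i * M i j

lemma evM_shift {k n : ℕ} (M : Fin k → Fin n → ZMod 2) (x u : Fin k → ZMod 2)
    (w : Fin n → ZMod 2) :
    evM (M + fun i j => u i * w j) x = evM M x + (∑ i, x i * u i) • w := by
  funext j
  simp only [evM, Pi.add_apply, Pi.smul_apply, smul_eq_mul, mul_add, Finset.sum_add_distrib,
    Finset.sum_mul, mul_assoc]

lemma exists_u {k : ℕ} (x x' : Fin k → ZMod 2) (hx : x ≠ 0) (hxx : x ≠ x') :
    ∃ u : Fin k → ZMod 2, ∑ i, x i * u i = 1 ∧ ∑ i, x' i * u i = 0 := by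
  have h01 : ∀ a : ZMod 2, a = 0 ∨ a = 1 := by decide
  by_cases h : ∃ i, x i ≠ 0 ∧ x' i = 0
  · obtain ⟨i, h1, h2⟩ := h
    refine ⟨Pi.single i 1, ?_, ?_⟩
    · have := (h01 (x i)).resolve_left h1
      simp [Pi.single_apply, this]
    · simp [Pi.single_apply, h2]
  · push Not at h
    obtain ⟨i, hi⟩ := Function.ne_iff.mp hx
    obtain ⟨j, hj⟩ := Function.ne_iff.mp hxx
    have hi' := h i hi
    have e1 := (h01 (x i)).resolve_left hi
    have e2 := (h01 (x' i)).resolve_left hi'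
    have e3 : x j = 0 := by
      by_contra hc
      exact hj (((h01 (x j)).resolve_left hc).trans ((h01 (x' j)).resolve_left (h j hc)).symm)
    have e4 : x' j = 1 := by
      refine (h01 (x' j)).resolve_left (fun hc => hj (e3.trans hc.symm))
    refine ⟨Pi.single i 1 + Pi.single j 1, ?_, ?_⟩
    · simp [Pi.single_apply, mul_add, Finset.sum_add_distrib, e1, e3]
    · simp [Pi.single_apply, mul_add, Finset.sum_add_distrib, e2, e4]
      decide

lemma shift_sum {k n : ℕ} (x x' : Fin k → ZMod 2) (hx : x ≠ 0) (hxx : x ≠ x')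
    (φ ψ : (Fin n → ZMod 2) → ℝ) :
    (2:ℝ) ^ n * ∑ M : Fin k → Fin n → ZMod 2, φ (evM M x) * ψ (evM M x') =
      (∑ y, φ y) * ∑ M : Fin k → Fin n → ZMod 2, ψ (evM M x') := by
  obtain ⟨u, hu, hu'⟩ := exists_u x x' hx hxx
  have key : ∀ w : Fin n → ZMod 2,
      ∑ M : Fin k → Fin n → ZMod 2, φ (evM M x) * ψ (evM M x') =
      ∑ M : Fin k → Fin n → ZMod 2, φ (evM M x + w) * ψ (evM M x') := by
    intro w
    rw [← Equiv.sum_comp (Equiv.addRight (fun i j => u i * w j : Fin k → Fin n → ZMod 2))]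
    refine Finset.sum_congr rfl fun M _ => ?_
    simp only [Equiv.coe_addRight, evM_shift, hu, hu', one_smul, zero_smul, add_zero]
  have h2 : (2:ℝ) ^ n * ∑ M : Fin k → Fin n → ZMod 2, φ (evM M x) * ψ (evM M x') =
      ∑ w : Fin n → ZMod 2, ∑ M : Fin k → Fin n → ZMod 2, φ (evM M x) * ψ (evM M x') := by
    simp
  rw [h2, Finset.sum_congr rfl (fun w _ => key w), Finset.sum_comm, Finset.mul_sum]
  refine Finset.sum_congr rfl fun M _ => ?_
  rw [← Finset.sum_mul]
  congr 1
  exact Equiv.sum_comp (Equiv.addLeft (evM M x)) φ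

lemma second_moment {k n : ℕ} (h : (Fin k → ZMod 2) → (Fin n → ZMod 2) → ℝ)
    (h0 : ∀ x, ∑ y, h x y = 0) (hb : ∀ y, h 0 y ^ 2 ≤ 4) :
    ∑ M : Fin k → Fin n → ZMod 2, (∑ x, h x (evM M x)) ^ 2 ≤
      2 ^ (k * n) * (4 + (∑ x, ∑ y, h x y ^ 2) / 2 ^ n) := by
  have hp : (0:ℝ) < 2 ^ n := by positivity
  have off : ∀ x x', x ≠ x' →
      ∑ M : Fin k → Fin n → ZMod 2, h x (evM M x) * h x' (evM M x') = 0 := by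
    have base : ∀ x x', x ≠ 0 → x ≠ x' →
        ∑ M : Fin k → Fin n → ZMod 2, h x (evM M x) * h x' (evM M x') = 0 := by
      intro x x' hx hxx
      have := shift_sum x x' hx hxx (h x) (h x')
      rw [h0, zero_mul] at this
      exact (mul_eq_zero.mp this).resolve_left hp.ne'
    intro x x' hxx
    by_cases hx : x = 0
    · have := base x' x (fun hc => hxx (hx.trans hc.symm)) hxx.symm
      rw [← this]
      exact Finset.sum_congr rfl fun M _ => mul_comm _ _
    · exact base x x' hx hxx
  have cardM : (∑ M : Fin k → Fin n → ZMod 2, (1:ℝ)) = 2 ^ (k * n) := by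
    simp [← pow_mul, mul_comm]
  have diag : ∀ x, x ≠ 0 → ∑ M : Fin k → Fin n → ZMod 2, h x (evM M x) ^ 2 =
      2 ^ (k * n) * ((∑ y, h x y ^ 2) / 2 ^ n) := by
    intro x hx
    have := shift_sum x 0 hx hx (fun y => h x y ^ 2) (fun _ => 1)
    rw [cardM] at this
    simp only [mul_one] at this
    field_simp
    linarith
  have diag0 : ∑ M : Fin k → Fin n → ZMod 2, h 0 (evM M 0) ^ 2 ≤ 2 ^ (k * n) * 4 := by
    rw [← cardM, Finset.sum_mul]
    exact Finset.sum_le_sum fun M _ => by simpa using hb _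
  have e1 : ∑ M : Fin k → Fin n → ZMod 2, (∑ x, h x (evM M x)) ^ 2 =
      ∑ x, ∑ M : Fin k → Fin n → ZMod 2, h x (evM M x) ^ 2 := by
    simp only [sq, Finset.sum_mul_sum]
    rw [Finset.sum_comm]
    refine Finset.sum_congr rfl fun x _ => ?_
    rw [Finset.sum_comm]
    exact Finset.sum_eq_single x (fun x' _ hx' => off x x' hx'.symm) (by simp)
  rw [e1, mul_add, Finset.sum_div, Finset.mul_sum, ← Finset.add_sum_erase _ _ (Finset.mem_univ 0)]
  refine add_le_add diag0 ?_
  rw [Finset.sum_congr rfl (fun x hx => diag x (Finset.ne_of_mem_erase hx))]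
  exact Finset.sum_le_sum_of_subset_of_nonneg (Finset.erase_subset _ _)
    (fun x _ _ => by positivity)

lemma dev_bound {k n : ℕ} (D : Finset ((Fin k → ZMod 2) × (Fin n → ZMod 2)))
    (g : ((Fin k → ZMod 2) × (Fin n → ZMod 2)) → ℝ) (hg : ∀ z, |g z| ≤ 1) :
    ∑ M : Fin k → Fin n → ZMod 2,
      ((∑ z ∈ D.filter (fun z => z.2 = fun j => ∑ i, z.1 i * M i j), g z)
        - (∑ z ∈ D, g z) / 2 ^ n) ^ 2 ≤ 2 ^ (k * n) * (4 + (D.card : ℝ) / 2 ^ n) := by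
  have hp : (0:ℝ) < 2 ^ n := by positivity
  set G : (Fin k → ZMod 2) → (Fin n → ZMod 2) → ℝ :=
    fun x y => if (x, y) ∈ D then g (x, y) else 0 with hG
  have hG1 : ∀ x y, |G x y| ≤ 1 := by
    intro x y
    simp only [hG]
    split_ifs
    · exact hg _
    · simp
  have cardY : (∑ y : Fin n → ZMod 2, (1:ℝ)) = 2 ^ n := by simp
  have hav : ∀ x, |(∑ y, G x y) / 2 ^ n| ≤ 1 := by
    intro x
    rw [abs_div, abs_of_pos hp, div_le_one hp, ← cardY]
    exact (Finset.abs_sum_le_sum_abs _ _).trans (Finset.sum_le_sum fun y _ => hG1 x y)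
  set h : (Fin k → ZMod 2) → (Fin n → ZMod 2) → ℝ :=
    fun x y => G x y - (∑ y, G x y) / 2 ^ n with hh
  have sumD : ∑ z ∈ D, g z = ∑ x, ∑ y, G x y := by
    rw [← Fintype.sum_prod_type' (f := G)]
    simp [hG]
  have hT : ∀ M : Fin k → Fin n → ZMod 2,
      (∑ z ∈ D.filter (fun z => z.2 = fun j => ∑ i, z.1 i * M i j), g z)
        - (∑ z ∈ D, g z) / 2 ^ n = ∑ x, h x (evM M x) := by
    intro M
    have : ∑ z ∈ D.filter (fun z => z.2 = fun j => ∑ i, z.1 i * M i j), g z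
        = ∑ x, G x (evM M x) := by
      have e : ∀ x, G x (evM M x) = ∑ y, if y = evM M x then G x y else 0 := by
        intro x; simp
      rw [Finset.sum_congr rfl (fun x _ => e x),
        ← Fintype.sum_prod_type' (f := fun x y => if y = evM M x then G x y else 0),
        Finset.sum_filter, ← Finset.sum_filter_add_sum_filter_not univ (fun z => z ∈ D)]
      rw [Finset.sum_eq_zero (s := univ.filter (fun z => z ∉ D))]
      · simp only [Finset.filter_univ_mem, add_zero, hG]
        refine Finset.sum_congr rfl fun z hz => ?_
        simp only [Prod.mk.eta, hz, if_true]
        rfl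
      · intro z hz
        simp only [Finset.mem_filter, Finset.mem_univ, true_and] at hz
        simp [hG, hz]
    rw [this, sumD, Finset.sum_div, ← Finset.sum_sub_distrib]
  have h0 : ∀ x, ∑ y, h x y = 0 := by
    intro x
    simp only [hh, Finset.sum_sub_distrib]
    simp
    field_simp
    simp
  have hb : ∀ y, h 0 y ^ 2 ≤ 4 := by
    intro y
    have a := abs_le.mp (hG1 0 y)
    have b := abs_le.mp (hav 0)
    simp only [hh]
    nlinarith [a.1, a.2, b.1, b.2]
  have hvar : ∑ x, ∑ y, h x y ^ 2 ≤ D.card := by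
    have c1 : (D.card : ℝ) = ∑ x, ∑ y, if (x, y) ∈ D then (1:ℝ) else 0 := by
      rw [← Fintype.sum_prod_type' (f := fun x y => if (x, y) ∈ D then (1:ℝ) else 0)]
      simp
    rw [c1]
    refine Finset.sum_le_sum fun x _ => ?_
    have c2 : ∑ y, h x y ^ 2 ≤ ∑ y, G x y ^ 2 := by
      have : ∑ y, h x y ^ 2 = ∑ y, G x y ^ 2 - (∑ y, G x y) ^ 2 / 2 ^ n := by
        have : ∀ y, h x y ^ 2 = G x y ^ 2 - 2 * ((∑ y, G x y) / 2 ^ n) * G x y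
            + ((∑ y, G x y) / 2 ^ n) ^ 2 * 1 := by
          intro y; simp only [hh]; ring
        rw [Finset.sum_congr rfl (fun y _ => this y), Finset.sum_add_distrib,
          Finset.sum_sub_distrib, ← Finset.mul_sum, ← Finset.mul_sum, cardY]
        field_simp
        ring
      rw [this]
      have : 0 ≤ (∑ y, G x y) ^ 2 / 2 ^ n := by positivity
      linarith
    refine c2.trans (Finset.sum_le_sum fun y _ => ?_)
    simp only [hG]
    split_ifs
    · exact (sq_le_one_iff_abs_le_one _).mpr (hg _)
    · simp
  rw [Finset.sum_congr rfl (fun M _ => by rw [hT M])]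
  refine (second_moment h h0 hb).trans ?_
  gcongr

lemma dev_abs {k n : ℕ} (D : Finset ((Fin k → ZMod 2) × (Fin n → ZMod 2)))
    (g : ((Fin k → ZMod 2) × (Fin n → ZMod 2)) → ℝ) (hg : ∀ z, |g z| ≤ 1)
    (hD : (2:ℝ) ≤ (D.card : ℝ) / 2 ^ n) :
    ∑ M : Fin k → Fin n → ZMod 2,
      |(∑ z ∈ D.filter (fun z => z.2 = fun j => ∑ i, z.1 i * M i j), g z)
        - (∑ z ∈ D, g z) / 2 ^ n| ≤ 2 ^ (k * n) * (2 * √((D.card : ℝ) / 2 ^ n)) := by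
  have h1 := dev_bound D g hg
  have cardM : (((univ : Finset (Fin k → Fin n → ZMod 2)).card : ℕ) : ℝ) = 2 ^ (k * n) := by
    simp [← pow_mul, mul_comm]
  refine abs_le_of_sq_le_sq' ?_ (by positivity) |>.2
  refine sq_sum_le_card_mul_sum_sq.trans ?_
  simp only [sq_abs]
  rw [cardM, mul_pow, mul_pow, Real.sq_sqrt (by positivity)]
  calc _ ≤ (2:ℝ) ^ (k * n) * (2 ^ (k * n) * (4 + (D.card : ℝ) / 2 ^ n)) := by gcongr
    _ ≤ (2:ℝ) ^ (k * n) * (2 ^ (k * n) * (4 * ((D.card : ℝ) / 2 ^ n))) := by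
      gcongr; linarith
    _ = _ := by ring

/-- for all sufficiently large `k`, for any `m ≤ 2^{k/20}`,
`D ⊆ {0,1}^m` with `|D| ≥ 2^{m−k/2}`, and Boolean `f`,
`E_{M}[‖f(U_{M,D}) − f(U_{m,D})‖] ≤ 2^{−k/9}` (the distance is `0` when `U_M` has no
mass on `D`, per the convention `U_{M,D} = U_{m,D}` then). -/
theorem stmt12 : ∃ K : ℕ, ∀ k ≥ K, ∀ m : ℕ, k ≤ m → (m:ℝ) ≤ 2 ^ ((k:ℝ)/20) →
    ∀ D : Finset ((Fin k → ZMod 2) × (Fin (m - k) → ZMod 2)),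
    (2:ℝ) ^ ((m:ℝ) - (k:ℝ)/2) ≤ D.card →
    ∀ f : ((Fin k → ZMod 2) × (Fin (m - k) → ZMod 2)) → Bool,
    (1 / (2:ℝ) ^ (k * (m - k))) * ∑ M : Fin k → Fin (m - k) → ZMod 2,
      (if (D.filter (fun z => z.2 = fun j => ∑ i, z.1 i * M i j)).Nonempty then
        |(∑ z ∈ D.filter (fun z => z.2 = fun j => ∑ i, z.1 i * M i j),
            if f z then (1:ℝ) else 0) /
          (D.filter (fun z => z.2 = fun j => ∑ i, z.1 i * M i j)).card -
          (∑ z ∈ D, if f z then (1:ℝ) else 0) / D.card|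
      else 0)
    ≤ (2:ℝ) ^ (-(k:ℝ)/9) := by
  refine ⟨16, fun k hk m hkm _ => ?_⟩
  have hk' : (16:ℝ) ≤ k := by exact_mod_cast hk
  have hn : ((m - k : ℕ) : ℝ) = (m:ℝ) - k := Nat.cast_sub hkm
  generalize m - k = n at hn ⊢
  intro D hD f
  have hp : (0:ℝ) < 2 ^ n := by positivity
  set μ : ℝ := (D.card : ℝ) / 2 ^ n with hμ
  have hμ1 : (2:ℝ) ^ ((k:ℝ)/2) ≤ μ := by
    rw [hμ, le_div_iff₀ hp, ← Real.rpow_natCast, ← Real.rpow_add (by norm_num)]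
    refine le_trans (le_of_eq ?_) hD
    rw [hn]
    congr 1
    ring
  have hμ2 : 2 ≤ μ := by
    refine le_trans ?_ hμ1
    calc (2:ℝ) = 2 ^ (1:ℝ) := by simp
      _ ≤ _ := Real.rpow_le_rpow_of_exponent_le (by norm_num) (by linarith)
  have hμ0 : 0 < μ := by linarith
  have hN : (0:ℝ) < D.card := by
    by_contra hc
    have : (D.card : ℝ) = 0 := le_antisymm (not_lt.mp hc) (Nat.cast_nonneg _)
    rw [hμ, this] at hμ0
    simp at hμ0
  set p : ℝ := (∑ z ∈ D, if f z then (1:ℝ) else 0) / D.card with hpdef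
  have hp0 : 0 ≤ p := div_nonneg (Finset.sum_nonneg fun z _ => by split_ifs <;> norm_num) hN.le
  have hp1 : p ≤ 1 := by
    rw [hpdef, div_le_one hN]
    calc _ ≤ ∑ z ∈ D, (1:ℝ) := Finset.sum_le_sum fun z _ => by split_ifs <;> norm_num
      _ = _ := by simp
  have hg : ∀ z, |(if f z then (1:ℝ) else 0) - p| ≤ 1 := by
    intro z
    rw [abs_le]
    split_ifs <;> constructor <;> linarith
  have b1 := dev_abs D (fun z => (if f z then (1:ℝ) else 0) - p) hg hμ2
  have b2 := dev_abs D (fun _ => (1:ℝ)) (by simp) hμ2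
  have z0 : ∑ z ∈ D, ((if f z then (1:ℝ) else 0) - p) = 0 := by
    rw [Finset.sum_sub_distrib, Finset.sum_const, nsmul_eq_mul, hpdef]
    field_simp
    simp
  rw [z0] at b1
  simp only [zero_div, sub_zero, Finset.sum_const, nsmul_eq_mul, mul_one] at b1 b2
  rw [← hμ] at b1 b2
  have pt : ∀ M : Fin k → Fin n → ZMod 2,
      (if (D.filter (fun z => z.2 = fun j => ∑ i, z.1 i * M i j)).Nonempty then
        |(∑ z ∈ D.filter (fun z => z.2 = fun j => ∑ i, z.1 i * M i j),
            if f z then (1:ℝ) else 0) /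
          (D.filter (fun z => z.2 = fun j => ∑ i, z.1 i * M i j)).card - p|
      else 0) ≤
      (|∑ z ∈ D.filter (fun z => z.2 = fun j => ∑ i, z.1 i * M i j),
        ((if f z then (1:ℝ) else 0) - p)| +
      |((D.filter (fun z => z.2 = fun j => ∑ i, z.1 i * M i j)).card : ℝ) - μ|) / μ := by
    intro M
    set E := D.filter (fun z => z.2 = fun j => ∑ i, z.1 i * M i j)
    split_ifs with hE
    · have hA : (0:ℝ) < E.card := by exact_mod_cast hE.card_pos
      set S := ∑ z ∈ E, ((if f z then (1:ℝ) else 0) - p) with hS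
      have hSA : |S| ≤ E.card := by
        refine (Finset.abs_sum_le_sum_abs _ _).trans ?_
        calc _ ≤ ∑ z ∈ E, (1:ℝ) := Finset.sum_le_sum fun z _ => hg z
          _ = _ := by simp
      have e : (∑ z ∈ E, if f z then (1:ℝ) else 0) / E.card - p = S / E.card := by
        rw [hS, Finset.sum_sub_distrib, Finset.sum_const, nsmul_eq_mul]
        field_simp
      rw [e, abs_div, abs_of_pos hA, div_le_div_iff₀ hA hμ0]
      have t1 : μ - E.card ≤ |(E.card : ℝ) - μ| := by
        rw [abs_sub_comm]; exact le_abs_self _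
      nlinarith [abs_nonneg S, abs_nonneg ((E.card : ℝ) - μ)]
    · positivity
  have tot := Finset.sum_le_sum fun M (_ : M ∈ (univ : Finset (Fin k → Fin n → ZMod 2))) => pt M
  rw [← Finset.sum_div, Finset.sum_add_distrib] at tot
  have hq : (0:ℝ) < 2 ^ (k * n) := by positivity
  have s0 : 0 < √μ := Real.sqrt_pos.mpr hμ0
  have fin1 : (4:ℝ) / √μ ≤ (2:ℝ) ^ (-(k:ℝ)/9) := by
    have : (2:ℝ) ^ ((k:ℝ)/4) ≤ √μ := by
      apply Real.le_sqrt_of_sq_le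
      refine le_trans (le_of_eq ?_) hμ1
      rw [← Real.rpow_natCast, ← Real.rpow_mul (by norm_num)]
      congr 1
      push_cast
      ring
    rw [div_le_iff₀ s0]
    calc (4:ℝ) = 2 ^ (2:ℝ) := by norm_num
      _ ≤ 2 ^ (-(k:ℝ)/9 + (k:ℝ)/4) :=
        Real.rpow_le_rpow_of_exponent_le (by norm_num) (by linarith)
      _ = 2 ^ (-(k:ℝ)/9) * 2 ^ ((k:ℝ)/4) := Real.rpow_add (by norm_num) _ _
      _ ≤ _ := by gcongr
  refine le_trans ?_ fin1
  rw [one_div, inv_mul_le_iff₀ hq]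
  refine tot.trans ?_
  rw [div_le_iff₀ hμ0]
  have : (2:ℝ) ^ (k * n) * (4 / √μ) * μ = 2 ^ (k * n) * (4 * √μ) := by
    have : μ = √μ * √μ := (Real.mul_self_sqrt hμ0.le).symm
    field_simp
    rw [sq]; exact this
  rw [this]
  linarith
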